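/- arXiv:2207.05156 — 2 statements merged into one kernel-verified Lean document; each statement's English description precedes it below -/
import Mathlib

section
/- Let a, b, c be real numbers with c > a > 0, and let x ∈ (0,1). Then sgn(D_a (F(a,b,c,x) / F(a,b,c+1,x))) = sgn(b), where D_a denotes the derivative with respect to the parameter a of the ratio of the two hypergeometric functions. -/
/-- The rising factorial (Pochhammer symbol): `(y)_j = y(y+1)⋯(y+j-1)`, `(y)_0 = 1`. -/
noncomputable def risingFactorial (y : ℝ) : ℕ → ℝ
  | 0 => 1
  | m + 1 => risingFactorial y m * (y + m)

/-- The Gaussian hypergeometric function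
`F(a,b,c,x) = ∑_{j≥0} (a)_j (b)_j / ((c)_j j!) xʲ`. -/
noncomputable def hypF (a b c x : ℝ) : ℝ :=
  ∑' j : ℕ, risingFactorial a j * risingFactorial b j /
    (risingFactorial c j * (Nat.factorial j : ℝ)) * x ^ j

open MeasureTheory ProbabilityTheory Set

lemma rf_pos {y : ℝ} (hy : 0 < y) (n : ℕ) : 0 < risingFactorial y n := by
  induction n with
  | zero => simp [risingFactorial]
  | succ n ih => rw [risingFactorial]; positivity

lemma rf_eq_asc (y : ℝ) (n : ℕ) : risingFactorial y n = (ascPochhammer ℝ n).eval y := by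
  induction n with
  | zero => simp [risingFactorial]
  | succ n ih => rw [risingFactorial, ascPochhammer_succ_eval, ih]

lemma rf_succ_left (y : ℝ) (n : ℕ) :
    risingFactorial y (n+1) = y * risingFactorial (y+1) n := by
  induction n with
  | zero => simp [risingFactorial]
  | succ n ih =>
    rw [risingFactorial, ih, risingFactorial]; push_cast; ring

lemma rf_binom (b : ℝ) (n : ℕ) :
    Ring.choose (b + n - 1) n = risingFactorial b n / (n.factorial : ℝ) := by
  have h := Ring.factorial_nsmul_multichoose_eq_ascPochhammer b n
  rw [Polynomial.ascPochhammer_smeval_eq_eval, ← rf_eq_asc, nsmul_eq_mul] at h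
  rw [Ring.multichoose_eq] at h
  rw [eq_div_iff (by positivity), ← h]; ring

lemma binom_hasSum (b y : ℝ) (hy : |y| < 1) :
    HasSum (fun j : ℕ => risingFactorial b j / (j.factorial : ℝ) * y ^ j) ((1 - y) ^ (-b)) := by
  have h := (Real.one_div_one_sub_rpow_hasFPowerSeriesOnBall_zero b).hasSum (y := y)
    (by simpa [enorm_eq_nnnorm, ← NNReal.coe_lt_coe] using hy)
  have h1 : 0 ≤ 1 - y := by linarith [abs_lt.1 hy]
  rw [Real.rpow_neg h1]
  simpa [rf_binom, FormalMultilinearSeries.ofScalars_apply_eq, mul_comm] using h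

lemma binom_hasSum' (b y : ℝ) (hy : |y| < 1) :
    HasSum (fun j : ℕ => (j : ℝ) * (risingFactorial b j / (j.factorial : ℝ)) * y ^ j)
      (b * (y * (1 - y) ^ (-(b+1)))) := by
  have h := (binom_hasSum (b+1) y hy).mul_left (b * y)
  rw [← hasSum_nat_add_iff' 1]
  simp only [Finset.range_one, Finset.sum_singleton, CharP.cast_eq_zero, zero_mul, sub_zero]
  rw [mul_assoc] at h
  refine h.congr_fun ?_ 
  intro j
  rw [rf_succ_left, Nat.factorial_succ]
  have : (j.factorial : ℝ) ≠ 0 := by positivity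
  have h2 : ((j : ℝ) + 1) ≠ 0 := by positivity
  push_cast
  field_simp
  ring

lemma beta_integrable {p q : ℝ} (hp : 0 < p) (hq : 0 < q) :
    IntegrableOn (fun t : ℝ => t ^ (p - 1) * (1 - t) ^ (q - 1)) (Ioo 0 1) := by
  have h := (Complex.betaIntegral_convergent (u := p) (v := q) (by simpa) (by simpa))
  rw [intervalIntegrable_iff_integrableOn_Ioo_of_le zero_le_one] at h
  refine (h.re).congr ?_
  filter_upwards [ae_restrict_mem measurableSet_Ioo] with t ht
  have h1 : 0 ≤ t := ht.1.le
  have h2 : 0 ≤ 1 - t := by linarith [ht.2]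
  have e1 := Complex.ofReal_cpow h1 (p-1)
  have e2 := Complex.ofReal_cpow h2 (q-1)
  push_cast at e1 e2
  rw [← e1, ← e2, ← Complex.ofReal_mul]
  simp

lemma beta_integral {p q : ℝ} (hp : 0 < p) (hq : 0 < q) :
    ∫ t in Ioo (0:ℝ) 1, t ^ (p - 1) * (1 - t) ^ (q - 1) = beta p q := by
  rw [beta_eq_betaIntegralReal p q hp hq, Complex.betaIntegral,
    intervalIntegral.integral_of_le zero_le_one, integral_Ioc_eq_integral_Ioo]
  have : ∫ t in Ioo (0:ℝ) 1, (t:ℂ) ^ ((p:ℂ) - 1) * (1 - (t:ℂ)) ^ ((q:ℂ) - 1) =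
      ∫ t in Ioo (0:ℝ) 1, ((t ^ (p - 1) * (1 - t) ^ (q - 1) : ℝ) : ℂ) := by
    refine setIntegral_congr_fun measurableSet_Ioo ?_
    intro t ht
    have h1 : 0 ≤ t := ht.1.le
    have h2 : 0 ≤ 1 - t := by linarith [ht.2]
    have e1 := Complex.ofReal_cpow h1 (p-1)
    have e2 := Complex.ofReal_cpow h2 (q-1)
    push_cast at e1 e2 ⊢
    rw [← e1, ← e2]
  rw [this, integral_complex_ofReal, Complex.ofReal_re]

lemma beta_shift {p q : ℝ} (hp : 0 < p) (hq : 0 < q) (j : ℕ) :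
    beta (p + j) q = risingFactorial p j / risingFactorial (p + q) j * beta p q := by
  induction j with
  | zero => simp [risingFactorial]
  | succ j ih =>
    have h1 : beta (p + (j + 1 : ℕ)) q = (p + j) / (p + q + j) * beta (p + j) q := by
      have e1 : p + ((j + 1 : ℕ) : ℝ) = (p + j) + 1 := by push_cast; ring
      have h3 : 0 < p + j := by positivity
      have h4 : 0 < p + j + q := by positivity
      rw [e1, beta, beta, Real.Gamma_add_one h3.ne', 
        show p + j + 1 + q = (p + j + q) + 1 by ring, Real.Gamma_add_one h4.ne']
      have := (Real.Gamma_pos_of_pos h4).ne'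
      rw [show p + q + j = p + j + q by ring]
      field_simp
    have := (rf_pos (add_pos hp hq) j).ne'
    have h5 : p + q + j ≠ 0 := by positivity
    rw [h1, ih, risingFactorial, risingFactorial]
    field_simp

lemma euler_gen {a C x : ℝ} (ha : 0 < a) (hC : a < C) (hx : x ∈ Ioo (0:ℝ) 1)
    (k : ℕ → ℝ) (g : ℝ → ℝ)
    (hk : ∀ t ∈ Ioo (0:ℝ) 1, HasSum (fun j => k j * (x * t) ^ j) (g t))
    (hs : Summable (fun j => k j * x ^ j)) :
    HasSum (fun j => k j * x ^ j * (risingFactorial a j / risingFactorial C j * beta a (C - a)))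
      (∫ t in Ioo (0:ℝ) 1, g t * (t ^ (a - 1) * (1 - t) ^ (C - a - 1))) := by
  have hq : 0 < C - a := by linarith
  have key := hasSum_integral_of_dominated_convergence (μ := volume.restrict (Ioo (0:ℝ) 1))
    (F := fun j t => k j * (x * t) ^ j * (t ^ (a - 1) * (1 - t) ^ (C - a - 1)))
    (f := fun t => g t * (t ^ (a - 1) * (1 - t) ^ (C - a - 1)))
    (fun j t => |k j * x ^ j| * (t ^ (a - 1) * (1 - t) ^ (C - a - 1)))
    (fun j => by
      apply Measurable.aestronglyMeasurable; fun_prop)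
    (fun j => by
      filter_upwards [ae_restrict_mem measurableSet_Ioo] with t ht
      have h1 : 0 < t := ht.1
      have h2 : 0 < 1 - t := by linarith [ht.2]
      have h3 : 0 ≤ t ^ (a - 1) * (1 - t) ^ (C - a - 1) := by positivity
      rw [norm_mul, Real.norm_eq_abs, Real.norm_eq_abs, abs_of_nonneg h3]
      refine mul_le_mul_of_nonneg_right ?_ h3
      rw [mul_pow, ← mul_assoc, abs_mul _ (t ^ j)]
      refine mul_le_of_le_one_right (abs_nonneg _) ?_
      rw [abs_of_pos (by positivity)]
      exact pow_le_one₀ h1.le ht.2.le)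
    (by
      filter_upwards with t
      exact hs.abs.mul_right _)
    (by
      simp_rw [tsum_mul_right]
      exact (beta_integrable ha hq).const_mul _)
    (by
      filter_upwards [ae_restrict_mem measurableSet_Ioo] with t ht
      exact (hk t ht).mul_right _)
  refine key.congr_fun ?_
  intro j
  have hj : 0 < a + j := by positivity
  have hb := beta_shift ha hq j
  rw [show a + (C - a) = C by ring] at hb
  rw [← hb, ← beta_integral hj hq, ← integral_const_mul]
  refine setIntegral_congr_fun measurableSet_Ioo ?_
  intro t ht
  have : t ^ (a + j - 1) = t ^ (a - 1) * t ^ j := by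
    rw [← Real.rpow_natCast, ← Real.rpow_add ht.1]; ring_nf
  simp only [this, mul_pow]
  ring

lemma hyp1 {a b c x : ℝ} (ha : 0 < a) (hac : a < c + 1) (hx : x ∈ Ioo (0:ℝ) 1) :
    hypF a b (c+1) x * beta a (c + 1 - a) = 
     ∫ t in Ioo (0:ℝ) 1, (1 - x * t) ^ (-b) * (t ^ (a - 1) * (1 - t) ^ (c + 1 - a - 1)) := by
  have hxt : ∀ t ∈ Ioo (0:ℝ) 1, |x * t| < 1 := fun t ht => by
    rw [abs_of_pos (mul_pos hx.1 ht.1)]; nlinarith [hx.1, hx.2, ht.1, ht.2]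
  have := euler_gen ha hac hx (fun j => risingFactorial b j / (j.factorial : ℝ))
    (fun t => (1 - x * t) ^ (-b)) (fun t ht => binom_hasSum b _ (hxt t ht))
    (binom_hasSum b x (by rw [abs_of_pos hx.1]; exact hx.2)).summable
  rw [← this.tsum_eq, hypF, ← tsum_mul_right]
  congr 1 with j
  have h1 := (rf_pos (by linarith : 0 < c + 1) j).ne'
  field_simp

lemma hyp2 {a b c x : ℝ} (ha : 0 < a) (hc : 0 < c) (hac : a < c + 1) (hx : x ∈ Ioo (0:ℝ) 1) :
    hypF a b c x * beta a (c + 1 - a) = hypF a b (c+1) x * beta a (c + 1 - a) + b / c * 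
     ∫ t in Ioo (0:ℝ) 1, (x * t * (1 - x * t) ^ (-(b + 1))) *
      (t ^ (a - 1) * (1 - t) ^ (c + 1 - a - 1)) := by
  have hxt : ∀ t ∈ Ioo (0:ℝ) 1, |x * t| < 1 := fun t ht => by
    rw [abs_of_pos (mul_pos hx.1 ht.1)]; nlinarith [hx.1, hx.2, ht.1, ht.2]
  have hx1 : |x| < 1 := by rw [abs_of_pos hx.1]; exact hx.2
  have h1 := euler_gen ha hac hx (fun j => risingFactorial b j / (j.factorial : ℝ))
    (fun t => (1 - x * t) ^ (-b)) (fun t ht => binom_hasSum b _ (hxt t ht))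
    (binom_hasSum b x hx1).summable
  have h2 := euler_gen ha hac hx (fun j => j * (risingFactorial b j / (j.factorial : ℝ)))
    _ (fun t ht => binom_hasSum' b _ (hxt t ht))
    (binom_hasSum' b x hx1).summable
  rw [hyp1 ha hac hx]
  have h3 := h1.add (h2.mul_left (1 / c))
  have e : b / c * ∫ t in Ioo (0:ℝ) 1, (x * t * (1 - x * t) ^ (-(b + 1))) *
      (t ^ (a - 1) * (1 - t) ^ (c + 1 - a - 1)) = 1 / c * ∫ t in Ioo (0:ℝ) 1,
      (b * (x * t * (1 - x * t) ^ (-(b + 1)))) *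
      (t ^ (a - 1) * (1 - t) ^ (c + 1 - a - 1)) := by
    simp_rw [mul_assoc b]
    rw [integral_const_mul]; ring
  rw [e, ← h3.tsum_eq, hypF, ← tsum_mul_right]
  congr 1 with j
  have h4 := (rf_pos (by linarith : 0 < c + 1) j).ne'
  have h5 := (rf_pos hc j).ne'
  have h6 : risingFactorial c j * (c + j) = c * risingFactorial (c+1) j := by
    rw [← rf_succ_left, risingFactorial]
  have h7 : (j.factorial : ℝ) ≠ 0 := by positivity
  have h8 : c + j ≠ 0 := by positivity
  have h9 : risingFactorial (c+1) j = risingFactorial c j * (c + j) / c := by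
    rw [h6]; field_simp
  rw [h9]
  field_simp

lemma exp_logit {s t c : ℝ} (ht : t ∈ Ioo (0:ℝ) 1) :
    t⁻¹ * (1 - t) ^ c * Real.exp (s * Real.log (t / (1 - t))) =
      t ^ (s - 1) * (1 - t) ^ (c + 1 - s - 1) := by
  have h1 : 0 < t := ht.1
  have h2 : 0 < 1 - t := by linarith [ht.2]
  rw [Real.rpow_def_of_pos h1, Real.rpow_def_of_pos h2, Real.rpow_def_of_pos h2,
    Real.log_div h1.ne' h2.ne', ← Real.exp_log (inv_pos.2 h1), Real.log_inv,
    ← Real.exp_add, ← Real.exp_add, ← Real.exp_add]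
  congr 1
  ring

lemma param_deriv {c M s : ℝ} {h : ℝ → ℝ} (hm : Measurable h)
    (h0 : ∀ t ∈ Ioo (0:ℝ) 1, 0 ≤ h t) (hM : ∀ t ∈ Ioo (0:ℝ) 1, h t ≤ M)
    (hs : s ∈ Ioo 0 (c + 1)) :
    HasDerivAt (fun s => ∫ t in Ioo (0:ℝ) 1, h t * (t ^ (s - 1) * (1 - t) ^ (c + 1 - s - 1)))
      (∫ t in Ioo (0:ℝ) 1, Real.log (t / (1 - t)) *
        (h t * (t ^ (s - 1) * (1 - t) ^ (c + 1 - s - 1)))) s ∧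
    IntegrableOn (fun t => h t * (t ^ (s - 1) * (1 - t) ^ (c + 1 - s - 1))) (Ioo 0 1) ∧
    IntegrableOn (fun t => Real.log (t / (1 - t)) *
        (h t * (t ^ (s - 1) * (1 - t) ^ (c + 1 - s - 1)))) (Ioo 0 1) := by
  have hI : ∀ s ∈ Ioo 0 (c + 1),
      IntegrableOn (fun t => h t * (t ^ (s - 1) * (1 - t) ^ (c + 1 - s - 1))) (Ioo 0 1) := by
    intro s hs
    refine ((beta_integrable hs.1 (by linarith [hs.2] : 0 < c + 1 - s)).const_mul M).mono'
      (by apply Measurable.aestronglyMeasurable; fun_prop) ?_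
    filter_upwards [ae_restrict_mem measurableSet_Ioo] with t ht
    have h1 : 0 < t := ht.1
    have h2 : 0 < 1 - t := by linarith [ht.2]
    have h3 : 0 ≤ t ^ (s - 1) * (1 - t) ^ (c + 1 - s - 1) := by positivity
    rw [Real.norm_eq_abs, abs_of_nonneg (mul_nonneg (h0 t ht) h3)]
    exact mul_le_mul_of_nonneg_right (hM t ht) h3
  set d : ℝ → ENNReal := fun t => ENNReal.ofReal (h t * (t⁻¹ * (1 - t) ^ c)) with hd
  have dm : Measurable d := by rw [hd]; fun_prop
  have dlt : ∀ᵐ t ∂(volume.restrict (Ioo (0:ℝ) 1)), d t < ⊤ := by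
    filter_upwards with t; exact ENNReal.ofReal_lt_top
  have dr : ∀ t ∈ Ioo (0:ℝ) 1, (d t).toReal = h t * (t⁻¹ * (1 - t) ^ c) := by
    intro t ht
    have h1 : 0 < t := ht.1
    have h2 : 0 < 1 - t := by linarith [ht.2]
    exact ENNReal.toReal_ofReal (mul_nonneg (h0 t ht) (by positivity))
  set ρ := (volume.restrict (Ioo (0:ℝ) 1)).withDensity d with hρ
  set X : ℝ → ℝ := fun t => Real.log (t / (1 - t)) with hX
  have hsub : Ioo 0 (c + 1) ⊆ integrableExpSet X ρ := by
    intro r hr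
    rw [integrableExpSet, mem_ofPred_eq, hρ, integrable_withDensity_iff_integrable_smul' dm dlt]
    refine (hI r hr).congr ?_
    filter_upwards [ae_restrict_mem measurableSet_Ioo] with t ht
    rw [smul_eq_mul, dr t ht, mul_assoc, exp_logit ht]
  have hint : s ∈ interior (integrableExpSet X ρ) :=
    interior_maximal hsub isOpen_Ioo hs
  have hder := hasDerivAt_mgf hint
  have e1 : mgf X ρ = (fun s => ∫ t in Ioo (0:ℝ) 1,
      h t * (t ^ (s - 1) * (1 - t) ^ (c + 1 - s - 1))) := by
    funext r
    rw [mgf, hρ, integral_withDensity_eq_integral_toReal_smul dm dlt]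
    refine setIntegral_congr_fun measurableSet_Ioo ?_
    intro t ht
    simp only [smul_eq_mul]
    rw [dr t ht, mul_assoc, exp_logit ht]
  have e2 : ∀ t ∈ Ioo (0:ℝ) 1, (d t).toReal • (X t * Real.exp (s * X t)) =
      X t * (h t * (t ^ (s - 1) * (1 - t) ^ (c + 1 - s - 1))) := by
    intro t ht
    rw [smul_eq_mul, dr t ht, ← exp_logit ht]; ring
  refine ⟨?_, hI s hs, ?_⟩
  · rw [e1, hρ, integral_withDensity_eq_integral_toReal_smul dm dlt] at hder
    convert hder using 1
    exact (setIntegral_congr_fun measurableSet_Ioo e2).symm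
  · have := integrable_pow_mul_exp_of_mem_interior_integrableExpSet hint 1
    simp only [pow_one] at this
    rw [hρ, integrable_withDensity_iff_integrable_smul' dm dlt] at this
    refine this.congr ?_
    filter_upwards [ae_restrict_mem measurableSet_Ioo] with t ht
    exact e2 t ht

lemma h_bound (x e : ℝ) (hx : x ∈ Ioo (0:ℝ) 1) :
    ∃ M, ∀ t ∈ Ioo (0:ℝ) 1, (1 - x * t) ^ e ≤ M := by
  have hc : ContinuousOn (fun t : ℝ => (1 - x * t) ^ e) (Icc 0 1) := by
    refine ContinuousOn.rpow_const (by fun_prop) ?_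
    intro t ht; left
    have : x * t < 1 := by nlinarith [hx.1, hx.2, ht.1, ht.2]
    linarith
  obtain ⟨M, hM⟩ := isCompact_Icc.bddAbove_image hc
  exact ⟨M, fun t ht => hM ⟨t, Ioo_subset_Icc_self ht, rfl⟩⟩

lemma pos_int {f : ℝ → ℝ} (hf : IntegrableOn f (Ioo 0 1)) (h0 : ∀ t ∈ Ioo (0:ℝ) 1, 0 ≤ f t)
    (r : ℝ) (hr : r ∈ Ico (0:ℝ) 1) (hp : ∀ t ∈ Ioo r 1, 0 < f t) :
    0 < ∫ t in Ioo (0:ℝ) 1, f t := by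
  rw [setIntegral_pos_iff_support_of_nonneg_ae _ hf]
  · refine lt_of_lt_of_le ?_ (measure_mono (s := Ioo r 1) ?_)
    · simp [hr.2]
    · intro t ht
      exact ⟨(hp t ht).ne', lt_of_le_of_lt hr.1 ht.1, ht.2⟩
  · filter_upwards [ae_restrict_mem measurableSet_Ioo] with t ht
    exact h0 t ht

lemma cov_pos {W g L : ℝ → ℝ} (hW : ∀ t ∈ Ioo (0:ℝ) 1, 0 < W t)
    (hg : StrictMonoOn g (Ioo 0 1)) (hL : StrictMonoOn L (Ioo 0 1))
    (hsurj : ∀ m, ∃ t ∈ Ioo (0:ℝ) 1, L t = m)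
    (i1 : IntegrableOn W (Ioo 0 1)) (i2 : IntegrableOn (fun t => L t * W t) (Ioo 0 1))
    (i3 : IntegrableOn (fun t => g t * W t) (Ioo 0 1))
    (i4 : IntegrableOn (fun t => L t * (g t * W t)) (Ioo 0 1)) :
    0 < ∫ t in Ioo (0:ℝ) 1, W t ∧
    0 < (∫ t in Ioo (0:ℝ) 1, L t * (g t * W t)) * (∫ t in Ioo (0:ℝ) 1, W t) -
      (∫ t in Ioo (0:ℝ) 1, g t * W t) * (∫ t in Ioo (0:ℝ) 1, L t * W t) := by
  have hI : 0 < ∫ t in Ioo (0:ℝ) 1, W t :=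
    pos_int i1 (fun t ht => (hW t ht).le) 0 (by simp) hW
  refine ⟨hI, ?_⟩
  set I := ∫ t in Ioo (0:ℝ) 1, W t
  set I' := ∫ t in Ioo (0:ℝ) 1, L t * W t
  set J := ∫ t in Ioo (0:ℝ) 1, g t * W t
  set J' := ∫ t in Ioo (0:ℝ) 1, L t * (g t * W t)
  obtain ⟨r, hr, hm⟩ := hsurj (I' / I)
  have hm' : L r * I = I' := by rw [hm]; field_simp
  have i5 := ((i4.sub (i3.const_mul (L r))).sub ((i2.sub (i1.const_mul (L r))).const_mul (g r)))
  have e5 : ∫ t in Ioo (0:ℝ) 1, ((L t * (g t * W t) - L r * (g t * W t)) -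
      g r * (L t * W t - L r * W t)) = J' - L r * J - g r * (I' - L r * I) := by
    have i6 : IntegrableOn (fun t => L t * (g t * W t) - L r * (g t * W t)) (Ioo 0 1) :=
      i4.sub (i3.const_mul (L r))
    have i7 : IntegrableOn (fun t => g r * (L t * W t - L r * W t)) (Ioo 0 1) :=
      (i2.sub (i1.const_mul (L r))).const_mul (g r)
    rw [integral_sub i6 i7,
      integral_sub i4 (i3.const_mul (L r)), integral_const_mul, integral_const_mul,
      integral_sub i2 (i1.const_mul (L r)), integral_const_mul]
  have ef : ∀ t, (L t * (g t * W t) - L r * (g t * W t)) -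
      g r * (L t * W t - L r * W t) = (L t - L r) * (g t - g r) * W t := by intro t; ring
  have hpos : 0 < ∫ t in Ioo (0:ℝ) 1, ((L t * (g t * W t) - L r * (g t * W t)) -
      g r * (L t * W t - L r * W t)) := by
    refine pos_int i5 ?_ r ⟨hr.1.le, hr.2⟩ ?_
    · intro t ht
      rw [ef]
      refine mul_nonneg ?_ (hW t ht).le
      rcases le_total t r with h | h
      · exact mul_nonneg_of_nonpos_of_nonpos (by linarith [hL.monotoneOn ht hr h])
          (by linarith [hg.monotoneOn ht hr h])
      · exact mul_nonneg (by linarith [hL.monotoneOn hr ht h])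
          (by linarith [hg.monotoneOn hr ht h])
    · intro t ht
      have ht' : t ∈ Ioo (0:ℝ) 1 := ⟨hr.1.trans ht.1, ht.2⟩
      rw [ef]
      exact mul_pos (mul_pos (by linarith [hL hr ht' ht.1]) (by linarith [hg hr ht' ht.1]))
        (hW t ht')
  rw [e5, ← hm'] at hpos
  rw [← hm']
  have : 0 < (J' - L r * J) * I := mul_pos (by linarith) hI
  linarith

/-- For `c > a > 0` and `0 < x < 1`,
`sgn(D_a (F(a,b,c,x)/F(a,b,c+1,x))) = sgn(b)`. -/
theorem stmt15 (a b c x : ℝ) (ha : 0 < a) (hac : a < c)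
    (hx : x ∈ Set.Ioo (0 : ℝ) 1) :
    Real.sign (deriv (fun a' : ℝ => hypF a' b c x / hypF a' b (c + 1) x) a) =
      Real.sign b := by
  have hc : 0 < c := ha.trans hac
  have hxt : ∀ t ∈ Ioo (0:ℝ) 1, 0 < 1 - x * t := fun t ht => by
    nlinarith [hx.1, hx.2, ht.1, ht.2]
  have has : a ∈ Ioo 0 (c + 1) := ⟨ha, by linarith⟩
  obtain ⟨M1, hM1⟩ := h_bound x (-b) hx
  obtain ⟨M2, hM2⟩ := h_bound x (-(b + 1)) hx
  obtain ⟨d1, i1, i2⟩ := param_deriv (h := fun t => (1 - x * t) ^ (-b)) (by fun_prop)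
    (fun t ht => (Real.rpow_pos_of_pos (hxt t ht) _).le) hM1 has
  obtain ⟨d2, i3, i4⟩ := param_deriv (h := fun t => x * t * (1 - x * t) ^ (-(b + 1)))
    (M := M2) (by fun_prop)
    (fun t ht => mul_nonneg (mul_pos hx.1 ht.1).le (Real.rpow_pos_of_pos (hxt t ht) _).le)
    (fun t ht => by
      have h1 := (Real.rpow_pos_of_pos (hxt t ht) (-(b + 1))).le
      refine le_trans ?_ (hM2 t ht)
      exact mul_le_of_le_one_left h1 (by linarith [hxt t ht])) has
  have eg : ∀ t ∈ Ioo (0:ℝ) 1, x * t * (1 - x * t) ^ (-(b + 1)) *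
      (t ^ (a - 1) * (1 - t) ^ (c + 1 - a - 1)) = x * t / (1 - x * t) *
      ((1 - x * t) ^ (-b) * (t ^ (a - 1) * (1 - t) ^ (c + 1 - a - 1))) := by
    intro t ht
    rw [show -(b + 1) = -b - 1 by ring, Real.rpow_sub_one (hxt t ht).ne']
    ring
  have hcov := cov_pos (W := fun t => (1 - x * t) ^ (-b) * (t ^ (a - 1) * (1 - t) ^ (c + 1 - a - 1)))
    (g := fun t => x * t / (1 - x * t)) (L := fun t => Real.log (t / (1 - t)))
    (fun t ht => by
      have h1 : 0 < t := ht.1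
      have h2 : 0 < 1 - t := by linarith [ht.2]
      have h3 := hxt t ht
      positivity)
    (fun t ht u hu htu => by
      simp only
      rw [div_lt_div_iff₀ (hxt t ht) (hxt u hu)]
      have := mul_lt_mul_of_pos_left htu hx.1
      nlinarith)
    (fun t ht u hu htu => by
      have h2 : 0 < 1 - t := by linarith [ht.2]
      have h3 : 0 < 1 - u := by linarith [hu.2]
      refine Real.log_lt_log (div_pos ht.1 h2) ?_
      rw [div_lt_div_iff₀ h2 h3]
      nlinarith)
    (fun m => by
      have := Real.exp_pos m
      refine ⟨Real.exp m / (1 + Real.exp m), ⟨by positivity, ?_⟩, ?_⟩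
      · rw [div_lt_one (by positivity)]; linarith
      · have : Real.exp m / (1 + Real.exp m) / (1 - Real.exp m / (1 + Real.exp m)) = Real.exp m := by
          have : 1 - Real.exp m / (1 + Real.exp m) = 1 / (1 + Real.exp m) := by
            field_simp; ring
          rw [this]; field_simp
        simp only [this, Real.log_exp])
    i1 i2 (i3.congr_fun (fun t ht => eg t ht) measurableSet_Ioo)
    (i4.congr_fun (fun t ht => by simp only [eg t ht]) measurableSet_Ioo)
  obtain ⟨hI, hcov⟩ := hcov
  rw [← setIntegral_congr_fun measurableSet_Ioo eg, ← setIntegral_congr_fun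
    (f := fun t => Real.log (t / (1 - t)) * (x * t * (1 - x * t) ^ (-(b + 1)) *
      (t ^ (a - 1) * (1 - t) ^ (c + 1 - a - 1)))) measurableSet_Ioo
    (fun t ht => by simp only [eg t ht])] at hcov
  have hd := ((d2.div d1 hI.ne').const_mul (b / c)).const_add 1
  have hev : (fun a' : ℝ => hypF a' b c x / hypF a' b (c + 1) x) =ᶠ[nhds a] (fun a' : ℝ =>
      1 + b / c * ((∫ t in Ioo (0:ℝ) 1, x * t * (1 - x * t) ^ (-(b + 1)) *
      (t ^ (a' - 1) * (1 - t) ^ (c + 1 - a' - 1))) / ∫ t in Ioo (0:ℝ) 1, (1 - x * t) ^ (-b) *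
      (t ^ (a' - 1) * (1 - t) ^ (c + 1 - a' - 1)))) := by
    filter_upwards [Ioo_mem_nhds has.1 has.2, d1.continuousAt.eventually (lt_mem_nhds hI)]
      with s hs hIs
    have h1 := hyp1 (b := b) hs.1 hs.2 hx
    have h2 := hyp2 (b := b) hs.1 hc hs.2 hx
    have hb := beta_pos hs.1 (by linarith [hs.2] : 0 < c + 1 - s)
    rw [← mul_div_mul_right _ _ hb.ne', h2, h1, add_div, div_self hIs.ne', mul_div_assoc]
  rw [hev.deriv_eq]
  erw [hd.deriv]
  rcases lt_trichotomy b 0 with hb | hb | hb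
  · rw [Real.sign_of_neg hb, Real.sign_of_neg]
    exact mul_neg_of_neg_of_pos (div_neg_of_neg_of_pos hb hc) (div_pos hcov (by positivity))
  · subst hb; simp
  · rw [Real.sign_of_pos hb, Real.sign_of_pos]
    exact mul_pos (div_pos hb hc) (div_pos hcov (by positivity))
end

section
/- Let ν > 0 and let (u_n)_{n≥0} be a bounded sequence of real numbers. Then the function f(x) = (1−x)^ν ∑_{n=0}^∞ ((ν)_n / n!) x^n u_n is differentiable on (0,1) with derivative f'(x) = (1−x)^{ν−1} ∑_{n=0}^∞ ((ν)_n / n!) (ν+n) (u_{n+1} − u_n) x^n. -/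
lemma bask_pos (ν : ℝ) (hν : 0 < ν) (n : ℕ) : 0 < risingFactorial ν n / (Nat.factorial n : ℝ) := by
  apply div_pos _ (by positivity)
  induction n with
  | zero => simp [risingFactorial]
  | succ k ih => rw [risingFactorial]; positivity

lemma bask_succ (ν : ℝ) (n : ℕ) :
    risingFactorial ν (n+1) / (Nat.factorial (n+1) : ℝ) * ((n:ℝ)+1)
      = risingFactorial ν n / (Nat.factorial n : ℝ) * (ν + n) := by
  rw [risingFactorial, Nat.factorial_succ]
  push_cast
  field_simp

lemma bask_summable (ν : ℝ) (hν : 0 < ν) (r : ℝ) (hr0 : 0 < r) (hr : r < 1) :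
    Summable (fun n : ℕ => risingFactorial ν n / (Nat.factorial n : ℝ) * (ν + n) * r ^ n) := by
  have hp := bask_pos ν hν
  have hs := bask_succ ν
  generalize ha : (fun n : ℕ => risingFactorial ν n / (Nat.factorial n : ℝ)) = a
  have ha' : ∀ n : ℕ, risingFactorial ν n / (Nat.factorial n : ℝ) = a n := fun n => by rw [← ha]
  simp only [ha'] at hp hs ⊢
  have hpos : ∀ n : ℕ, 0 < a n * (ν + n) * r ^ n := fun n => by
    have := hp n
    positivity
  apply summable_of_ratio_test_tendsto_lt_one hr (Filter.Eventually.of_forall fun n => (hpos n).ne')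
  have e : (fun n : ℕ => ‖a (n+1) * (ν + ((n+1 : ℕ):ℝ)) * r ^ (n+1)‖ / ‖a n * (ν + n) * r ^ n‖)
      = fun n : ℕ => (ν * (1 / ((n:ℝ)+1)) + 1) * r := by
    funext n
    rw [Real.norm_of_nonneg (hpos _).le, Real.norm_of_nonneg (hpos _).le, ← hs n]
    have := hp (n+1)
    push_cast
    field_simp
    try ring
  rw [e]
  have := ((tendsto_one_div_add_atTop_nhds_zero_nat (𝕜 := ℝ)).const_mul ν).add_const 1 |>.mul_const r
  simpa using this

/-- Derivative of Baskakov's operator: for `ν > 0` and bounded `(u_n)`,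
`f(x) = (1-x)^ν ∑_n ((ν)_n/n!) xⁿ u_n` is differentiable on `(0,1)` with
`f'(x) = (1-x)^{ν-1} ∑_n ((ν)_n/n!) (ν+n) (u_{n+1}-u_n) xⁿ`. -/
theorem stmt17 (ν : ℝ) (hν : 0 < ν) (u : ℕ → ℝ) (C : ℝ)
    (hu : ∀ n : ℕ, |u n| ≤ C) :
    ∀ x ∈ Set.Ioo (0 : ℝ) 1,
      HasDerivAt
        (fun y : ℝ => (1 - y) ^ ν *
          ∑' n : ℕ, risingFactorial ν n / (Nat.factorial n : ℝ) * y ^ n * u n)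
        ((1 - x) ^ (ν - 1) *
          ∑' n : ℕ, risingFactorial ν n / (Nat.factorial n : ℝ) *
            (ν + (n : ℝ)) * (u (n + 1) - u n) * x ^ n)
        x := by
  intro x hx
  obtain ⟨hx0, hx1⟩ := hx
  have hp := bask_pos ν hν
  have hs := bask_succ ν
  have hsum := bask_summable ν hν
  generalize ha : (fun n : ℕ => risingFactorial ν n / (Nat.factorial n : ℝ)) = a
  have ha' : ∀ n : ℕ, risingFactorial ν n / (Nat.factorial n : ℝ) = a n := fun n => by rw [← ha]
  simp only [ha'] at hp hs hsum ⊢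
  have hC : 0 ≤ C := (abs_nonneg _).trans (hu 0)
  -- summability with bounded multipliers
  have hb : ∀ v : ℕ → ℝ, (∀ n, |v n| ≤ C) →
      Summable (fun n : ℕ => a n * (ν + n) * x ^ n * v n) := by
    intro v hv
    refine Summable.of_norm_bounded ((hsum x hx0 hx1).mul_right C) (fun n => ?_)
    have h1 : 0 ≤ a n * (ν + n) * x ^ n := by have := hp n; positivity
    rw [norm_mul, Real.norm_of_nonneg h1]
    exact mul_le_mul_of_nonneg_left (hv n) h1
  have hF : Summable (fun n : ℕ => a n * x ^ n * u n) := by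
    refine Summable.of_norm_bounded (((hsum x hx0 hx1).mul_right C).mul_right ν⁻¹) (fun n => ?_)
    have h1 : 0 ≤ a n * x ^ n := by have := hp n; positivity
    rw [norm_mul, Real.norm_of_nonneg h1, Real.norm_eq_abs]
    calc a n * x ^ n * |u n| ≤ a n * x ^ n * C := mul_le_mul_of_nonneg_left (hu n) h1
      _ = a n * ν * x ^ n * C * ν⁻¹ := by field_simp
      _ ≤ _ := by
        have := hp n
        gcongr
        simp
  have hA := hb (fun n => u (n+1)) (fun n => hu _)
  have hB := hb u hu
  obtain ⟨r, hxr, hr1⟩ := exists_between hx1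
  have hr0 : 0 < r := hx0.trans hxr
  have hbd : Summable (fun n : ℕ => a n * (n * r ^ (n-1)) * C) := by
    rw [← summable_nat_add_iff 1]
    refine ((hsum r hr0 hr1).mul_right C).congr (fun n => ?_)
    rw [← hs n]
    push_cast
    try simp only [Nat.add_sub_cancel]
    ring
  have hD : HasDerivAt (fun y : ℝ => ∑' n : ℕ, a n * y ^ n * u n)
      (∑' n : ℕ, a n * (n * x ^ (n-1)) * u n) x := by
    refine hasDerivAt_tsum_of_isPreconnected (t := Set.Ioo 0 r) (y₀ := x)
      (g := fun n y => a n * y ^ n * u n) (g' := fun n y => a n * (n * y ^ (n-1)) * u n)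
      hbd isOpen_Ioo isPreconnected_Ioo ?_ ?_ ⟨hx0, hxr⟩ hF ⟨hx0, hxr⟩
    · intro n y _
      exact ((hasDerivAt_pow n y).const_mul (a n)).mul_const (u n)
    · intro n y hy
      have hy0 : 0 < y := hy.1
      have := hp n
      have h1 : 0 ≤ a n * (n * y ^ (n-1)) := by positivity
      rw [norm_mul, Real.norm_of_nonneg h1, Real.norm_eq_abs]
      have hyr : y ≤ r := hy.2.le
      have := hu n
      gcongr
  have hA' : Summable (fun n : ℕ => a n * (n * x ^ (n-1)) * u n) := by
    rw [← summable_nat_add_iff 1]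
    refine hA.congr (fun n => ?_)
    rw [← hs n]
    push_cast
    try simp only [Nat.add_sub_cancel]
    ring
  have hAe : ∑' n : ℕ, a n * (n * x ^ (n-1)) * u n = ∑' n : ℕ, a n * (ν + n) * x ^ n * u (n+1) := by
    rw [hA'.tsum_eq_zero_add]
    simp only [Nat.cast_zero, zero_mul, mul_zero, zero_add]
    refine tsum_congr (fun n => ?_)
    rw [← hs n]
    push_cast
    try simp only [Nat.add_sub_cancel]
    ring
  have hBe : ∑' n : ℕ, a n * (ν + n) * x ^ n * u n
      = ν * ∑' n : ℕ, a n * x ^ n * u n + x * ∑' n : ℕ, a n * (n * x ^ (n-1)) * u n := by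
    rw [← tsum_mul_left, ← tsum_mul_left, ← (hF.mul_left ν).tsum_add (hA'.mul_left x)]
    refine tsum_congr (fun n => ?_)
    rcases n with _ | n
    · simp; ring
    · simp only [Nat.add_sub_cancel]; ring
  have hG : ∑' n : ℕ, a n * (ν + n) * (u (n + 1) - u n) * x ^ n
      = ∑' n : ℕ, a n * (ν + n) * x ^ n * u (n+1) - ∑' n : ℕ, a n * (ν + n) * x ^ n * u n := by
    rw [← hA.tsum_sub hB]
    exact tsum_congr (fun n => by ring)
  have h1x : 0 < 1 - x := by linarith
  have hP : HasDerivAt (fun y : ℝ => (1 - y) ^ ν) (-1 * ν * (1 - x) ^ (ν - 1)) x :=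
    ((hasDerivAt_id x).const_sub 1).rpow_const (Or.inl h1x.ne')
  refine (hP.mul hD).congr_deriv ?_
  have hpow : (1 - x) ^ ν = (1 - x) ^ (ν - 1) * (1 - x) := by
    rw [Real.rpow_sub_one h1x.ne']; field_simp
  rw [hG, hBe, ← hAe, hpow]
  ring
end
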